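/- arXiv:0711.2879 — 2 statements merged into one kernel-verified Lean document; each statement's English description precedes it below -/
import Mathlib

section
/- Let X = (X_t)_{t≥0} be a real-valued additive process (X_0 = 0, independent increments, continuous in probability, cadlag paths) with E[X_t] = 0 and E[|X_t|^n] < ∞ for all n ≥ 1 and t ≥ 0. Define g_n(x,t) = Γ_n(x, −F_2(t), …, −F_n(t)). Then g_n is a time–space harmonic function relative to X: for all 0 ≤ s ≤ t, E[g_n(X_t, t) | σ(X_r, r ≤ s)] = g_n(X_s, s) almost surely; moreover g_n(x,t) = Σ_{j=0}^n C(n,j) Γ_{n−j}(0, −F_2(t), …, −F_{n−j}(t)) x^j, so g_n(·, t) is a polynomial in x of degree n for each fixed t. -/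
open MeasureTheory ProbabilityTheory Filter Topology
open scoped NNReal

/-- The Kendall polynomials `Γ_n`, expressing moments in terms of cumulants:
`Γ_0 = 1` and `Γ_{n+1}(x_1,…,x_{n+1}) = Σ_{j=0}^n C(n,j) Γ_j(x_1,…,x_j) x_{n+1-j}`.
The argument function `x : ℕ → ℝ` encodes the variables `x_1, x_2, …`
(only the values `x 1, …, x n` are used by `kendall n x`). -/
noncomputable def kendall : ℕ → (ℕ → ℝ) → ℝ
  | 0, _ => 1
  | n + 1, x =>
      ∑ j ∈ (Finset.range (n + 1)).attach,
        (n.choose j.1 : ℝ) * kendall j.1 x * x (n + 1 - j.1)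
decreasing_by exact Finset.mem_range.mp j.2

/-- A function `f : ℝ≥0 → ℝ` is cadlag: right-continuous with left limits. -/
def IsCadlag (f : ℝ≥0 → ℝ) : Prop :=
  (∀ t : ℝ≥0, ContinuousWithinAt f (Set.Ici t) t) ∧
    ∀ t : ℝ≥0, 0 < t → ∃ l : ℝ, Tendsto f (𝓝[<] t) (𝓝 l)

lemma kendall_zero' (x : ℕ → ℝ) : kendall 0 x = 1 := by
  rw [kendall]

lemma kendall_succ' (n : ℕ) (x : ℕ → ℝ) : kendall (n + 1) x =
    ∑ p ∈ Finset.HasAntidiagonal.antidiagonal n, (n.choose p.1 : ℝ) * kendall p.1 x * x (p.2 + 1) := by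
  rw [kendall, Finset.sum_attach (Finset.range (n + 1))
    (fun j => (n.choose j : ℝ) * kendall j x * x (n + 1 - j)),
    Finset.Nat.sum_antidiagonal_eq_sum_range_succ_mk]
  refine Finset.sum_congr rfl fun j hj => ?_
  have : n + 1 - j = n - j + 1 := by
    have := Finset.mem_range.mp hj
    omega
  simp [this]

/-- Exponential generating function. -/
noncomputable def egf (a : ℕ → ℝ) : PowerSeries ℝ :=
  PowerSeries.mk fun n => a n / (n.factorial : ℝ)

lemma egf_inj {a b : ℕ → ℝ} (h : egf a = egf b) : a = b := by
  funext n
  have := congrArg (PowerSeries.coeff n) h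
  simp only [egf, PowerSeries.coeff_mk] at this
  have hn : (n.factorial : ℝ) ≠ 0 := by positivity
  field_simp at this
  exact this

lemma egf_mul (a b : ℕ → ℝ) : egf a * egf b =
    egf fun n => ∑ p ∈ Finset.HasAntidiagonal.antidiagonal n, (n.choose p.1 : ℝ) * a p.1 * b p.2 := by
  ext n
  simp only [egf, PowerSeries.coeff_mul, PowerSeries.coeff_mk, Finset.sum_div]
  refine Finset.sum_congr rfl fun p hp => ?_
  obtain ⟨i, j⟩ := p
  have hp' : i + j = n := Finset.HasAntidiagonal.mem_antidiagonal.mp hp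
  subst hp'
  have h := Nat.add_choose_mul_factorial_mul_factorial i j
  rw [← Nat.choose_symm_add] at h
  have h' : ((i + j).choose i : ℝ) * i.factorial * j.factorial = (i + j).factorial := by
    exact_mod_cast h
  have hi : (i.factorial : ℝ) ≠ 0 := by positivity
  have hj : (j.factorial : ℝ) ≠ 0 := by positivity
  have hij : ((i + j).factorial : ℝ) ≠ 0 := by positivity
  simp only
  field_simp
  rw [← h']
  ring

lemma egf_deriv (a : ℕ → ℝ) :
    PowerSeries.derivative ℝ (egf a) = egf fun n => a (n + 1) := by
  ext n
  simp only [egf, PowerSeries.coeff_mk, PowerSeries.coeff_derivative]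
  rw [Nat.factorial_succ]
  push_cast
  have hn : (n.factorial : ℝ) ≠ 0 := by positivity
  have hn' : (n : ℝ) + 1 ≠ 0 := by positivity
  field_simp

lemma egf_kendall_deriv (x : ℕ → ℝ) :
    PowerSeries.derivative ℝ (egf fun n => kendall n x) =
      (egf fun n => kendall n x) * egf fun n => x (n + 1) := by
  rw [egf_deriv, egf_mul]
  congr 1
  funext n
  exact kendall_succ' n x

lemma kendall_unique (a x : ℕ → ℝ) (h0 : a 0 = 1)
    (h : ∀ n, a (n + 1) =
      ∑ p ∈ Finset.HasAntidiagonal.antidiagonal n, (n.choose p.1 : ℝ) * a p.1 * x (p.2 + 1)) (n : ℕ) :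
    a n = kendall n x := by
  induction n using Nat.strong_induction_on with
  | _ n ih =>
    cases n with
    | zero => rw [h0, kendall_zero']
    | succ n =>
      rw [h, kendall_succ']
      refine Finset.sum_congr rfl fun p hp => ?_
      rw [ih p.1 (by have := Finset.HasAntidiagonal.mem_antidiagonal.mp hp; omega)]

lemma kendall_add (n : ℕ) (x y : ℕ → ℝ) : kendall n (fun k => x k + y k) =
    ∑ p ∈ Finset.HasAntidiagonal.antidiagonal n, (n.choose p.1 : ℝ) * kendall p.1 x * kendall p.2 y := by
  symm
  refine kendall_unique (fun n => ∑ p ∈ Finset.HasAntidiagonal.antidiagonal n,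
    (n.choose p.1 : ℝ) * kendall p.1 x * kendall p.2 y) _ (by simp [kendall_zero']) ?_ n
  intro m
  refine congrFun (egf_inj (a := fun m => ∑ p ∈ Finset.HasAntidiagonal.antidiagonal (m+1),
    ((m+1).choose p.1 : ℝ) * kendall p.1 x * kendall p.2 y)
    (b := fun m => ∑ p ∈ Finset.HasAntidiagonal.antidiagonal m, (m.choose p.1 : ℝ) *
      (∑ q ∈ Finset.HasAntidiagonal.antidiagonal p.1,
        (p.1.choose q.1 : ℝ) * kendall q.1 x * kendall q.2 y) * (x (p.2 + 1) + y (p.2 + 1))) ?_) m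
  rw [← egf_deriv (fun n => ∑ p ∈ Finset.HasAntidiagonal.antidiagonal n,
    (n.choose p.1 : ℝ) * kendall p.1 x * kendall p.2 y),
    ← egf_mul (fun n => ∑ p ∈ Finset.HasAntidiagonal.antidiagonal n,
    (n.choose p.1 : ℝ) * kendall p.1 x * kendall p.2 y) (fun n => x (n+1) + y (n+1)),
    ← egf_mul (fun n => kendall n x) (fun n => kendall n y)]
  have hadd : (egf fun n => x (n + 1) + y (n + 1)) =
      (egf fun n => x (n + 1)) + egf fun n => y (n + 1) := by
    ext n
    simp [egf, add_div]
  rw [hadd, Derivation.leibniz, egf_kendall_deriv, egf_kendall_deriv]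
  simp only [smul_eq_mul]
  ring

lemma kendall_egf_add (x y : ℕ → ℝ) : (egf fun n => kendall n fun k => x k + y k) =
    (egf fun n => kendall n x) * egf fun n => kendall n y := by
  rw [egf_mul]
  congr 1
  funext n
  exact kendall_add n x y

lemma kendall_congr (n : ℕ) {x y : ℕ → ℝ} (h : ∀ k, 1 ≤ k → x k = y k) :
    kendall n x = kendall n y := by
  refine kendall_unique (fun n => kendall n x) y (kendall_zero' x) (fun m => ?_) n
  rw [kendall_succ']
  refine Finset.sum_congr rfl fun p hp => ?_
  rw [h (p.2 + 1) (by omega)]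

lemma kendall_single (n : ℕ) (x : ℝ) : kendall n (fun k => if k = 1 then x else 0) = x ^ n := by
  symm
  refine kendall_unique (fun n => x ^ n) _ (pow_zero x) (fun m => ?_) n
  rw [Finset.sum_eq_single (m, 0)]
  · simp [pow_succ]
  · rintro ⟨i, j⟩ hp hne
    have := Finset.HasAntidiagonal.mem_antidiagonal.mp hp
    have hj : j ≠ 0 := by
      rintro rfl
      apply hne
      simpa using this
    simp [hj]
  · simp

lemma kendall_expand (n : ℕ) (x : ℝ) (y : ℕ → ℝ) :
    (kendall n fun k => if k = 1 then x else y k) = ∑ j ∈ Finset.range (n + 1),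
      (n.choose j : ℝ) * (kendall (n - j) fun k => if k = 1 then 0 else y k) * x ^ j := by
  have : (fun k => if k = 1 then x else y k) = fun k =>
      (if k = 1 then x else 0) + (if k = 1 then 0 else y k) := by
    funext k
    split_ifs <;> simp
  rw [this, kendall_add, Finset.Nat.sum_antidiagonal_eq_sum_range_succ_mk]
  refine Finset.sum_congr rfl fun j hj => ?_
  simp only [kendall_single]
  ring

lemma kendall_poly (n : ℕ) (y : ℕ → ℝ) : ∃ p : Polynomial ℝ, p.natDegree = n ∧
    ∀ x : ℝ, (kendall n fun k => if k = 1 then x else y k) = p.eval x := by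
  refine ⟨∑ j ∈ Finset.range (n + 1), Polynomial.monomial j
      ((n.choose j : ℝ) * (kendall (n - j) fun k => if k = 1 then 0 else y k)), ?_, ?_⟩
  · apply le_antisymm
    · apply Polynomial.natDegree_sum_le_of_forall_le
      intro j hj
      refine (Polynomial.natDegree_monomial_le _).trans ?_
      have := Finset.mem_range.mp hj
      omega
    · apply Polynomial.le_natDegree_of_ne_zero
      simp [Polynomial.finsetSum_coeff, Polynomial.coeff_monomial, kendall_zero']
  · intro x
    rw [kendall_expand, Polynomial.eval_finsetSum]
    simp [Polynomial.eval_monomial]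

/-- The function `g_n(x,t) = Γ_n(x, -F_2(t), …, -F_n(t))` is time–space harmonic relative to
the additive process `X`; moreover it expands as
`g_n(x,t) = Σ_{j=0}^n C(n,j) Γ_{n-j}(0, -F_2(t), …, -F_{n-j}(t)) x^j`,
so that `g_n(·,t)` is a polynomial of degree `n` in `x` for each fixed `t`. -/
theorem additive_timeSpaceHarmonic
    {Ω : Type*} {mΩ : MeasurableSpace Ω} (μ : Measure Ω) [IsProbabilityMeasure μ]
    (X : ℝ≥0 → Ω → ℝ) (hXmeas : ∀ t, StronglyMeasurable (X t))
    (hX0 : ∀ ω, X 0 ω = 0)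
    (hindep : ∀ s t : ℝ≥0, s ≤ t →
      Indep (MeasurableSpace.comap (fun ω => X t ω - X s ω) (inferInstance : MeasurableSpace ℝ))
        (MeasureTheory.Filtration.natural X hXmeas s) μ)
    (hcontP : ∀ (t : ℝ≥0) (ε : ℝ), 0 < ε →
      Tendsto (fun s => μ {ω | ε ≤ |X s ω - X t ω|}) (𝓝 t) (𝓝 0))
    (hcadlag : ∀ ω, IsCadlag fun t => X t ω)
    (hmom : ∀ (n : ℕ) (t : ℝ≥0), Integrable (fun ω => |X t ω| ^ n) μ)
    (hcent : ∀ t : ℝ≥0, ∫ ω, X t ω ∂μ = 0)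
    (F : ℕ → ℝ≥0 → ℝ)
    (hF : ∀ n, 2 ≤ n → ∀ t : ℝ≥0,
      ∫ ω, X t ω ^ n ∂μ = kendall n fun k => if k = 1 then 0 else F k t)
    (n : ℕ) (hn : 1 ≤ n) :
    (∀ s t : ℝ≥0, s ≤ t →
        μ[(fun ω => kendall n fun k => if k = 1 then X t ω else -F k t) |
            MeasureTheory.Filtration.natural X hXmeas s]
          =ᵐ[μ] fun ω => kendall n fun k => if k = 1 then X s ω else -F k s) ∧
      (∀ (x : ℝ) (t : ℝ≥0),
        (kendall n fun k => if k = 1 then x else -F k t)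
          = ∑ j ∈ Finset.range (n + 1),
              (n.choose j : ℝ) * (kendall (n - j) fun k => if k = 1 then 0 else -F k t)
                * x ^ j) ∧
      ∀ t : ℝ≥0, ∃ p : Polynomial ℝ, p.natDegree = n ∧
        ∀ x : ℝ, (kendall n fun k => if k = 1 then x else -F k t) = p.eval x := by
  refine ⟨?_, fun x t => kendall_expand n x _, fun t => kendall_poly n _⟩
  intro s t hst
  set D : Ω → ℝ := fun ω => X t ω - X s ω with hD
  have hDm : StronglyMeasurable D := (hXmeas t).sub (hXmeas s)
  have hXs : ∀ (k : ℕ) (r : ℝ≥0), Integrable (fun ω => X r ω ^ k) μ := by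
    intro k r
    refine (hmom k r).mono ((hXmeas r).pow k).aestronglyMeasurable (ae_of_all _ fun ω => ?_)
    simp
  have hDi : ∀ k : ℕ, Integrable (fun ω => D ω ^ k) μ := by
    intro k
    refine Integrable.mono' (((hmom k t).add (hmom k s)).const_mul (2 ^ (k - 1)))
      (hDm.pow k).aestronglyMeasurable (ae_of_all _ fun ω => ?_)
    rw [norm_pow, Real.norm_eq_abs]
    refine (pow_le_pow_left₀ (abs_nonneg _) (abs_sub (X t ω) (X s ω)) k).trans ?_
    exact add_pow_le (abs_nonneg _) (abs_nonneg _) k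
  have hℱle : (Filtration.natural X hXmeas s) ≤ mΩ := (Filtration.natural X hXmeas).le s
  have hXsm : StronglyMeasurable[Filtration.natural X hXmeas s] (X s) :=
    (Filtration.stronglyAdapted_natural hXmeas) s
  have hind : IndepFun (X s) D μ := by
    rw [IndepFun_iff_Indep]
    exact (indep_of_indep_of_le_right (hindep s t hst) hXsm.measurable.comap_le).symm
  have hprod : ∀ (f g : ℝ → ℝ), Measurable f → Measurable g →
      IndepFun (fun ω => f (X s ω)) (fun ω => g (D ω)) μ := fun f g hf hg => hind.comp hf hg
  have hmomK : ∀ (k : ℕ) (r : ℝ≥0),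
      ∫ ω, X r ω ^ k ∂μ = kendall k fun k => if k = 1 then 0 else F k r := by
    intro k r
    rcases k with _ | _ | k
    · simp [kendall_zero']
    · simp [kendall_succ' 0, hcent]
    · exact hF _ (by omega) r
  -- the moments of the increment
  have hmD : ∀ k : ℕ, ∫ ω, D ω ^ k ∂μ =
      kendall k fun k => if k = 1 then 0 else F k t - F k s := by
    have key : (egf fun k => ∫ ω, X s ω ^ k ∂μ) * (egf fun k => ∫ ω, D ω ^ k ∂μ) =
        egf fun k => ∫ ω, X t ω ^ k ∂μ := by
      rw [egf_mul]
      congr 1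
      funext k
      have h1 : (fun ω => X t ω ^ k) = fun ω => ∑ p ∈ Finset.HasAntidiagonal.antidiagonal k,
          (k.choose p.1 : ℝ) * (X s ω ^ p.1 * D ω ^ p.2) := by
        funext ω
        have : X t ω = X s ω + D ω := by simp [hD]
        rw [this, (Commute.all (X s ω) (D ω)).add_pow']
        simp
      rw [h1, integral_finsetSum]
      · refine Finset.sum_congr rfl fun p hp => ?_
        rw [integral_const_mul, mul_assoc]
        congr 1
        exact ((hprod (fun x => x ^ p.1) (fun x => x ^ p.2) (by fun_prop)
          (by fun_prop)).integral_fun_mul_eq_mul_integral (hXs p.1 s).aestronglyMeasurable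
          (hDi p.2).aestronglyMeasurable).symm
      · intro p hp
        exact ((hprod (fun x => x ^ p.1) (fun x => x ^ p.2) (by fun_prop)
          (by fun_prop)).integrable_mul (hXs p.1 s) (hDi p.2)).const_mul _
    simp only [hmomK] at key
    have h2 : (fun k => if k = 1 then 0 else F k t) = fun k =>
        (if k = 1 then 0 else F k s) + (if k = 1 then 0 else F k t - F k s) := by
      funext k
      split_ifs <;> simp
    rw [h2, kendall_egf_add] at key
    have hne : (egf fun n => kendall n fun k => if k = 1 then 0 else F k s) ≠ 0 := by
      intro h
      have := congrArg (PowerSeries.coeff 0) h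
      simp [egf, kendall_zero'] at this
    exact congrFun (egf_inj (mul_left_cancel₀ hne key))
  -- decomposition
  let G : ℕ → Ω → ℝ := fun i ω => kendall i fun k => if k = 1 then X s ω else -F k t
  have hGm : ∀ i, StronglyMeasurable[Filtration.natural X hXmeas s] (G i) := by
    intro i
    obtain ⟨p, -, hp⟩ := kendall_poly i (fun k => -F k t)
    have : G i = fun ω => p.eval (X s ω) := funext fun ω => hp _
    rw [this]
    exact p.continuous.comp_stronglyMeasurable hXsm
  have hGi : ∀ i, Integrable (G i) μ := by
    intro i
    have : G i = fun ω => ∑ j ∈ Finset.range (i + 1),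
      (i.choose j : ℝ) * (kendall (i - j) fun k => if k = 1 then 0 else -F k t) * X s ω ^ j :=
      funext fun ω => kendall_expand i _ _
    rw [this]
    exact integrable_finsetSum _ fun j hj => (hXs j s).const_mul _
  have hGD : ∀ i j, Integrable (G i * fun ω => D ω ^ j) μ := by
    intro i j
    obtain ⟨p, -, hp⟩ := kendall_poly i (fun k => -F k t)
    have : G i = fun ω => p.eval (X s ω) := funext fun ω => hp _
    have hg := hGi i
    rw [this] at hg ⊢
    exact (hprod (fun x => p.eval x) (fun x => x ^ j) p.continuous.measurable
      (by fun_prop)).integrable_mul hg (hDi j)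
  have hdec : (fun ω => kendall n fun k => if k = 1 then X t ω else -F k t) =
      ∑ p ∈ Finset.HasAntidiagonal.antidiagonal n, (n.choose p.1 : ℝ) • (G p.1 * fun ω => D ω ^ p.2) := by
    funext ω
    have : (fun k => if k = 1 then X t ω else -F k t) = fun k =>
        (if k = 1 then X s ω else -F k t) + (if k = 1 then D ω else 0) := by
      funext k
      split_ifs <;> simp [hD]
    rw [this, kendall_add]
    simp [kendall_single, G, mul_assoc]
  have hcD : ∀ j : ℕ, μ[fun ω => D ω ^ j | Filtration.natural X hXmeas s]
      =ᵐ[μ] fun _ => ∫ ω, D ω ^ j ∂μ := by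
    intro j
    refine condExp_indep_eq (m₁ := MeasurableSpace.comap D inferInstance)
      hDm.measurable.comap_le hℱle ?_ (hindep s t hst)
    exact ((comap_measurable D).pow_const j).stronglyMeasurable
  have hterm : ∀ p ∈ Finset.HasAntidiagonal.antidiagonal n,
      μ[(n.choose p.1 : ℝ) • (G p.1 * fun ω => D ω ^ p.2) | Filtration.natural X hXmeas s]
      =ᵐ[μ] fun ω => (n.choose p.1 : ℝ) * G p.1 ω *
        kendall p.2 fun k => if k = 1 then 0 else F k t - F k s := by
    intro p hp
    filter_upwards [condExp_smul (n.choose p.1 : ℝ) (G p.1 * fun ω => D ω ^ p.2)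
      (Filtration.natural X hXmeas s) (μ := μ),
      condExp_mul_of_stronglyMeasurable_left (hGm p.1) (hGD p.1 p.2) (hDi p.2), hcD p.2]
      with ω h1 h2 h3
    rw [h1, Pi.smul_apply, h2, Pi.mul_apply, h3, hmD, smul_eq_mul, mul_assoc]
  rw [hdec]
  refine (condExp_finsetSum (fun p hp => (hGD p.1 p.2).smul _) _).trans ?_
  have hall : ∀ᵐ ω ∂μ, ∀ p ∈ Finset.HasAntidiagonal.antidiagonal n,
      (μ[(n.choose p.1 : ℝ) • (G p.1 * fun ω => D ω ^ p.2) | Filtration.natural X hXmeas s]) ω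
      = (n.choose p.1 : ℝ) * G p.1 ω *
        kendall p.2 fun k => if k = 1 then 0 else F k t - F k s := by
    exact (Finset.eventually_all _).2 hterm
  filter_upwards [hall] with ω hω
  rw [Finset.sum_apply, Finset.sum_congr rfl hω]
  have : (fun k => if k = 1 then X s ω else -F k s) = fun k =>
      (if k = 1 then X s ω else -F k t) + (if k = 1 then 0 else F k t - F k s) := by
    funext k
    split_ifs <;> ring
  rw [this, kendall_add]
end

section
/- Let X = (X_t)_{t≥0} be a real-valued additive process (X_0 = 0, independent increments, continuous in probability, cadlag paths) with E[X_t] = 0 and E[|X_t|^n] < ∞ for all n ≥ 1 and t ≥ 0. Then for every n ≥ 2 the cumulant function t ↦ F_n(t) has finite variation on every bounded interval [0, T]. -/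
open MeasureTheory ProbabilityTheory Filter Topology
open scoped NNReal

theorem eVariationOn_add_aux (f g : ℝ≥0 → ℝ) (s : Set ℝ≥0) :
    eVariationOn (fun t => f t + g t) s ≤ eVariationOn f s + eVariationOn g s := by
  refine iSup_le fun p => ?_
  calc _ ≤ ∑ i ∈ Finset.range p.1, (edist (f (p.2.1 (i + 1))) (f (p.2.1 i))
            + edist (g (p.2.1 (i + 1))) (g (p.2.1 i))) :=
        Finset.sum_le_sum fun i _ => edist_add_add_le _ _ _ _
    _ = _ := Finset.sum_add_distrib
    _ ≤ _ := add_le_add (eVariationOn.sum_le (f := f) p.2.2.1 p.2.2.2)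
        (eVariationOn.sum_le (f := g) p.2.2.1 p.2.2.2)

theorem lbv_add_aux {f g : ℝ≥0 → ℝ} {s : Set ℝ≥0} (hf : LocallyBoundedVariationOn f s)
    (hg : LocallyBoundedVariationOn g s) :
    LocallyBoundedVariationOn (fun t => f t + g t) s := fun a b ha hb =>
  ne_top_of_le_ne_top (ENNReal.add_ne_top.2 ⟨hf a b ha hb, hg a b ha hb⟩)
    (eVariationOn_add_aux f g _)

theorem lbv_const_aux (c : ℝ) (s : Set ℝ≥0) :
    LocallyBoundedVariationOn (fun _ : ℝ≥0 => c) s :=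
  (monotoneOn_const).locallyBoundedVariationOn

theorem lbv_mul_aux {f g : ℝ≥0 → ℝ} {s : Set ℝ≥0} (hf : LocallyBoundedVariationOn f s)
    (hg : LocallyBoundedVariationOn g s) :
    LocallyBoundedVariationOn (fun t => f t * g t) s := hf.mul hg

theorem lbv_sum_aux {ι : Type*} (u : Finset ι) (f : ι → ℝ≥0 → ℝ) {s : Set ℝ≥0}
    (hf : ∀ i ∈ u, LocallyBoundedVariationOn (f i) s) :
    LocallyBoundedVariationOn (fun t => ∑ i ∈ u, f i t) s := by
  classical
  induction u using Finset.induction_on with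
  | empty => simpa using lbv_const_aux 0 s
  | insert a u ha ih =>
    simp only [Finset.sum_insert ha]
    exact lbv_add_aux (hf a (by simp)) (ih fun i hi => hf i (by simp [hi]))

theorem kendall_succ_aux (n : ℕ) (x : ℕ → ℝ) :
    kendall (n + 1) x = ∑ j ∈ Finset.range (n + 1),
      (n.choose j : ℝ) * kendall j x * x (n + 1 - j) := by
  rw [kendall]
  exact Finset.sum_attach (Finset.range (n + 1))
    (fun j => (n.choose j : ℝ) * kendall j x * x (n + 1 - j))

/-- Polynomial tangent line inequality. -/
theorem poly_tangent_aux (p : Polynomial ℝ)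
    (hp : ∀ x, 0 ≤ p.derivative.derivative.eval x) (x y : ℝ) :
    p.eval x + p.derivative.eval x * (y - x) ≤ p.eval y := by
  have hd : deriv (fun x => p.eval x) = fun x => p.derivative.eval x := by
    funext z; exact p.deriv
  have hc : ConvexOn ℝ Set.univ (fun x => p.eval x) := by
    refine convexOn_univ_of_deriv2_nonneg p.differentiable ?_ ?_
    · rw [hd]; exact p.derivative.differentiable
    · intro z
      simp only [Function.iterate_succ, Function.iterate_zero, Function.comp, id, hd]
      rw [p.derivative.deriv]; exact hp z
  rcases lt_trichotomy x y with h | h | h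
  · have := hc.le_slope_of_hasDerivAt (Set.mem_univ x) (Set.mem_univ y) h (p.hasDerivAt x)
    rw [slope_def_field, le_div_iff₀ (sub_pos.2 h)] at this
    linarith
  · simp [h]
  · have := hc.slope_le_of_hasDerivAt (Set.mem_univ y) (Set.mem_univ x) h (p.hasDerivAt x)
    rw [slope_def_field, div_le_iff₀ (sub_pos.2 h)] at this
    linarith

theorem poly_integrable_aux {Ω : Type*} {mΩ : MeasurableSpace Ω} (μ : Measure Ω)
    (Y : Ω → ℝ) (hY : StronglyMeasurable Y)
    (hmom : ∀ n : ℕ, Integrable (fun ω => |Y ω| ^ n) μ) (p : Polynomial ℝ) :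
    Integrable (fun ω => p.eval (Y ω)) μ := by
  simp only [Polynomial.eval_eq_sum_range]
  refine integrable_finset_sum _ fun i _ => Integrable.const_mul ?_ _
  refine (hmom i).mono' (hY.pow i).aestronglyMeasurable ?_
  exact Filter.Eventually.of_forall fun ω => by simp

theorem poly_mono_aux {Ω : Type*} {mΩ : MeasurableSpace Ω} (μ : Measure Ω)
    [IsProbabilityMeasure μ]
    (X : ℝ≥0 → Ω → ℝ) (hXmeas : ∀ t, StronglyMeasurable (X t))
    (hindep : ∀ s t : ℝ≥0, s ≤ t →
      Indep (MeasurableSpace.comap (fun ω => X t ω - X s ω) (inferInstance : MeasurableSpace ℝ))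
        (MeasureTheory.Filtration.natural X hXmeas s) μ)
    (hmom : ∀ (n : ℕ) (t : ℝ≥0), Integrable (fun ω => |X t ω| ^ n) μ)
    (hcent : ∀ t : ℝ≥0, ∫ ω, X t ω ∂μ = 0) (p : Polynomial ℝ)
    (hp : ∀ x, 0 ≤ p.derivative.derivative.eval x) :
    Monotone (fun t => ∫ ω, p.eval (X t ω) ∂μ) := by
  intro s t hst
  have hI : ∀ (q : Polynomial ℝ) t, Integrable (fun ω => q.eval (X t ω)) μ := fun q t =>
    poly_integrable_aux μ (X t) (hXmeas t) (fun n => hmom n t) q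
  have hX : ∀ t, Integrable (X t) μ := fun t => by simpa using hI Polynomial.X t
  have hind : IndepFun (fun ω => X t ω - X s ω) (X s) μ := by
    rw [IndepFun_iff_Indep]
    refine indep_of_indep_of_le_right (hindep s t hst) ?_
    exact le_iSup₂_of_le (f := fun j (_ : j ≤ s) => MeasurableSpace.comap (X j) _) s le_rfl le_rfl
  have hind2 : IndepFun (fun ω => p.derivative.eval (X s ω)) (fun ω => X t ω - X s ω) μ :=
    hind.symm.comp (φ := fun x => p.derivative.eval x) (ψ := id)
      p.derivative.continuous.measurable measurable_id
  have hprod : Integrable (fun ω => p.derivative.eval (X s ω) * (X t ω - X s ω)) μ :=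
    hind2.integrable_mul (hI _ s) ((hX t).sub (hX s))
  have hzero : ∫ ω, p.derivative.eval (X s ω) * (X t ω - X s ω) ∂μ = 0 := by
    rw [hind2.integral_fun_mul_eq_mul_integral (hI _ s).aestronglyMeasurable
      ((hX t).sub (hX s)).aestronglyMeasurable, integral_sub (hX t) (hX s), hcent, hcent]
    simp
  calc ∫ ω, p.eval (X s ω) ∂μ
      = ∫ ω, (p.eval (X s ω) + p.derivative.eval (X s ω) * (X t ω - X s ω)) ∂μ := by
        rw [integral_add (hI p s) hprod, hzero, add_zero]
    _ ≤ _ := integral_mono ((hI p s).add hprod) (hI p t) fun ω => poly_tangent_aux p hp _ _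

theorem poly_convex_aux (m : ℕ) (c : ℝ) (hc : |c| = 1) (x : ℝ) :
    0 ≤ (Polynomial.C (((m : ℝ) + 2) * (m + 1)) * (Polynomial.X ^ 2 + Polynomial.X ^ (2 * m + 2))
      + Polynomial.C c * Polynomial.X ^ (m + 2) :
        Polynomial ℝ).derivative.derivative.eval x := by
  have h : (Polynomial.C (((m : ℝ) + 2) * (m + 1)) *
      (Polynomial.X ^ 2 + Polynomial.X ^ (2 * m + 2))
      + Polynomial.C c * Polynomial.X ^ (m + 2) :
        Polynomial ℝ).derivative.derivative.eval x
      = ((m : ℝ) + 2) * (m + 1) * (2 + (2 * m + 2) * (2 * m + 1) * (x ^ m) ^ 2 + c * x ^ m) := by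
    simp [Polynomial.derivative_X_pow]
    ring
  rw [h]
  refine mul_nonneg (by positivity) ?_
  have hm : (0 : ℝ) ≤ m := Nat.cast_nonneg m
  have hc2 : c ^ 2 = 1 := by rw [← sq_abs, hc]; norm_num
  have h1 : 0 ≤ ((2 * m + 2) * (2 * m + 1) - 1 : ℝ) * (x ^ m) ^ 2 :=
    mul_nonneg (by nlinarith) (by positivity)
  nlinarith [sq_nonneg (c + x ^ m)]

theorem moment_lbv_aux {Ω : Type*} {mΩ : MeasurableSpace Ω} (μ : Measure Ω)
    [IsProbabilityMeasure μ]
    (X : ℝ≥0 → Ω → ℝ) (hXmeas : ∀ t, StronglyMeasurable (X t))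
    (hindep : ∀ s t : ℝ≥0, s ≤ t →
      Indep (MeasurableSpace.comap (fun ω => X t ω - X s ω) (inferInstance : MeasurableSpace ℝ))
        (MeasureTheory.Filtration.natural X hXmeas s) μ)
    (hmom : ∀ (n : ℕ) (t : ℝ≥0), Integrable (fun ω => |X t ω| ^ n) μ)
    (hcent : ∀ t : ℝ≥0, ∫ ω, X t ω ∂μ = 0) (m : ℕ) :
    LocallyBoundedVariationOn (fun t => ∫ ω, X t ω ^ (m + 2) ∂μ) Set.univ := by
  have hI : ∀ (q : Polynomial ℝ) t, Integrable (fun ω => q.eval (X t ω)) μ := fun q t =>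
    poly_integrable_aux μ (X t) (hXmeas t) (fun n => hmom n t) q
  have key : ∀ c : ℝ, |c| = 1 → LocallyBoundedVariationOn _ Set.univ := fun c hc =>
    ((poly_mono_aux μ X hXmeas hindep hmom hcent _
      (poly_convex_aux m c hc)).monotoneOn Set.univ).locallyBoundedVariationOn
  have := lbv_add_aux (lbv_mul_aux (lbv_const_aux (1 / 2) _) (key 1 (by simp)))
    (lbv_mul_aux (lbv_const_aux (-(1 / 2)) _) (key (-1) (by simp)))
  convert this using 2 with t
  rw [← integral_const_mul, ← integral_const_mul,
    ← integral_add ((hI _ t).const_mul _) ((hI _ t).const_mul _)]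
  congr 1
  funext ω
  simp
  ring

/-- **Proposition 1 (finite variation).** The cumulant functions `F_n`, `n ≥ 2`, of a centered
additive process with finite moments of all orders have finite variation on every bounded
interval `[0, T]`. -/
theorem additive_cumulant_boundedVariation
    {Ω : Type*} {mΩ : MeasurableSpace Ω} (μ : Measure Ω) [IsProbabilityMeasure μ]
    (X : ℝ≥0 → Ω → ℝ) (hXmeas : ∀ t, StronglyMeasurable (X t))
    (hX0 : ∀ ω, X 0 ω = 0)
    (hindep : ∀ s t : ℝ≥0, s ≤ t →
      Indep (MeasurableSpace.comap (fun ω => X t ω - X s ω) (inferInstance : MeasurableSpace ℝ))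
        (MeasureTheory.Filtration.natural X hXmeas s) μ)
    (hcontP : ∀ (t : ℝ≥0) (ε : ℝ), 0 < ε →
      Tendsto (fun s => μ {ω | ε ≤ |X s ω - X t ω|}) (𝓝 t) (𝓝 0))
    (hcadlag : ∀ ω, IsCadlag fun t => X t ω)
    (hmom : ∀ (n : ℕ) (t : ℝ≥0), Integrable (fun ω => |X t ω| ^ n) μ)
    (hcent : ∀ t : ℝ≥0, ∫ ω, X t ω ∂μ = 0)
    (F : ℕ → ℝ≥0 → ℝ)
    (hF : ∀ n, 2 ≤ n → ∀ t : ℝ≥0,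
      ∫ ω, X t ω ^ n ∂μ = kendall n fun k => if k = 1 then 0 else F k t)
    (n : ℕ) (hn : 2 ≤ n) (T : ℝ≥0) :
    BoundedVariationOn (F n) (Set.Icc 0 T) := by
  have hK : ∀ m, LocallyBoundedVariationOn
      (fun t => kendall m fun k => if k = 1 then 0 else F k t) Set.univ := by
    intro m
    match m with
    | 0 => simpa [kendall] using lbv_const_aux 1 Set.univ
    | 1 => simpa [kendall_succ_aux] using lbv_const_aux 0 Set.univ
    | m + 2 =>
      simp only [← hF (m + 2) (by omega)]
      exact moment_lbv_aux μ X hXmeas hindep hmom hcent m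
  have hx : ∀ m, LocallyBoundedVariationOn
      (fun t => if m + 1 = 1 then 0 else F (m + 1) t) Set.univ := by
    intro m
    induction m using Nat.strong_induction_on with
    | _ m ih =>
      have h : (fun t => if m + 1 = 1 then 0 else F (m + 1) t) = fun t =>
          (kendall (m + 1) fun k => if k = 1 then 0 else F k t) +
          (-1) * ∑ j ∈ Finset.range m, (m.choose (j + 1) : ℝ) *
            (kendall (j + 1) fun k => if k = 1 then 0 else F k t) *
            (if (m - 1 - j) + 1 = 1 then 0 else F ((m - 1 - j) + 1) t) := by
        funext t
        rw [kendall_succ_aux, Finset.sum_range_succ']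
        have : ∀ j ∈ Finset.range m, m + 1 - (j + 1) = (m - 1 - j) + 1 := by
          intro j hj
          have := Finset.mem_range.1 hj
          omega
        rw [Finset.sum_congr rfl fun j hj => by rw [this j hj]]
        simp [kendall]
      rw [h]
      refine lbv_add_aux (hK _) (lbv_mul_aux (lbv_const_aux _ _) (lbv_sum_aux _ _ ?_))
      intro j hj
      have := Finset.mem_range.1 hj
      exact lbv_mul_aux (lbv_mul_aux (lbv_const_aux _ _) (hK _)) (ih _ (by omega))
  obtain ⟨m, rfl⟩ : ∃ m, n = m + 2 := ⟨n - 2, by omega⟩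
  have := hx (m + 1) 0 T (Set.mem_univ _) (Set.mem_univ _)
  simpa using this
end
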